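/- (Theorem 4, relation for UOc) Let n ≥ 1 and g ≥ 0, and let U_g be the set of genus-g elements of the coset U = β·C_ρ in S_{2n}. Write N(T) for the number of equivalence classes of U_g under the equivalence relation generated by σ ≈ β²·σ·β⁻² together with σ ≈ t(σ) for each map t in the set T, where the possible maps are the reversal σ ↦ r·σ·r and the swap σ ↦ β⁻¹·ρ·σ⁻¹·β. Then: if n is even, N({reversal}) = N({swap}); and if n is odd, N({reversal}) = 2·N({reversal, swap}). -/

import Mathlib

/-- The fixed-point-free involution of `Fin (2n)` pairing `2k` with `2k+1`. -/
def rho (n : ℕ) : Equiv.Perm (Fin (2 * n)) :=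
  Function.Involutive.toPerm
    (fun x => ⟨if x.val % 2 = 0 then x.val + 1 else x.val - 1, by
      have := x.isLt; split_ifs with h <;> omega⟩)
    (by
      intro x
      have hx := x.isLt
      apply Fin.ext
      dsimp only
      split_ifs <;> omega)

/-- The order-reversing involution `x ↦ 2n - 1 - x` of `Fin (2n)`. -/
def rev (n : ℕ) : Equiv.Perm (Fin (2 * n)) :=
  Function.Involutive.toPerm
    (fun x => ⟨2 * n - 1 - x.val, by have := x.isLt; omega⟩)
    (by
      intro x
      have hx := x.isLt
      apply Fin.ext
      dsimp only
      omega)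

/-- The number of cycles of a permutation of `Fin (2n)`, counting fixed points. -/
def numCycles (n : ℕ) (x : Equiv.Perm (Fin (2 * n))) : ℕ :=
  Multiset.card x.cycleType + (2 * n - x.support.card)

/-- The genus-`g` part of the coset `U = β·C_ρ`. -/
def Ugen (n g : ℕ) : Set (Equiv.Perm (Fin (2 * n))) :=
  {σ | (∃ ξ ∈ Subgroup.centralizer {rho n}, σ = finRotate (2 * n) * ξ) ∧
       numCycles n σ + numCycles n (σ * rho n) + 2 * g = n + 2}

/-- The number of equivalence classes of a set `s` of permutations under the smallest
equivalence relation identifying `σ` with `f σ` for every `f` in `F`. -/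
noncomputable def numClasses (n : ℕ) (s : Set (Equiv.Perm (Fin (2 * n))))
    (F : Set (Equiv.Perm (Fin (2 * n)) → Equiv.Perm (Fin (2 * n)))) : ℕ :=
  Nat.card (Quot (fun a b : s => ∃ f ∈ F, (b : Equiv.Perm (Fin (2 * n))) = f a))

/-- Conjugation by `β²`. -/
def conjB2 (n : ℕ) : Equiv.Perm (Fin (2 * n)) → Equiv.Perm (Fin (2 * n)) :=
  fun σ => finRotate (2 * n) ^ 2 * σ * (finRotate (2 * n) ^ 2)⁻¹

/-- The swap map `σ ↦ β⁻¹·ρ·σ⁻¹·β`. -/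
def swapMap (n : ℕ) : Equiv.Perm (Fin (2 * n)) → Equiv.Perm (Fin (2 * n)) :=
  fun σ => (finRotate (2 * n))⁻¹ * rho n * σ⁻¹ * finRotate (2 * n)

/-- The mirror map `σ ↦ σ·ρ`. -/
def mirrorMap (n : ℕ) : Equiv.Perm (Fin (2 * n)) → Equiv.Perm (Fin (2 * n)) :=
  fun σ => σ * rho n

/-- The reversal map `σ ↦ r·σ·r`. -/
def revMap (n : ℕ) : Equiv.Perm (Fin (2 * n)) → Equiv.Perm (Fin (2 * n)) :=
  fun σ => rev n * σ * rev n

section Count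

/-- Counting: if an invariant `e` is preserved by `R` and flipped by `t`, then adjoining `t`
halves the number of classes. -/
theorem card_quot_eq_two_mul {X : Type*} (R : X → X → Prop) (t : X → X) (e : X → ℤˣ)
    (he : ∀ a b, R a b → e a = e b) (ht : ∀ a, e (t a) = - e a)
    (hR : ∀ a b, R a b → Quot.mk R (t a) = Quot.mk R (t b))
    (htt : ∀ a, Quot.mk R (t (t a)) = Quot.mk R a) :
    Nat.card (Quot R) = 2 * Nat.card (Quot (fun a b => R a b ∨ b = t a)) := by
  classical
  have hflip : ∀ a, e (t a) ≠ e a := by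
    intro a h
    rw [ht] at h
    exact neg_units_ne_self _ h
  let f : Quot R → Quot (fun a b => R a b ∨ b = t a) × ℤˣ :=
    fun q => (Quot.map id (fun a b h => Or.inl h) q, Quot.lift e he q)
  let k : Quot (fun a b => R a b ∨ b = t a) → ℤˣ → Quot R :=
    Quot.lift (fun a u => if e a = u then Quot.mk R a else Quot.mk R (t a)) (by
      rintro a b (h | rfl)
      · funext u
        simp only [he a b h, Quot.sound h, hR a b h]
      · funext u
        simp only [htt]
        by_cases h1 : e a = u
        · have h2 : ¬ e (t a) = u := fun h => hflip a (h.trans h1.symm)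
          simp [h1, h2]
        · have h2 : e (t a) = u := by
            rw [ht, ← Int.units_ne_iff_eq_neg.mp (Ne.symm h1)]
          simp [h1, h2])
  have hcard : Nat.card (Quot R) = Nat.card (Quot (fun a b => R a b ∨ b = t a) × ℤˣ) := by
    refine Nat.card_congr ⟨f, fun x => k x.1 x.2, ?_, ?_⟩
    · rintro ⟨a⟩
      simp [f, k, Quot.map]
    · rintro ⟨⟨a⟩, u⟩
      by_cases h1 : e a = u
      · simp [f, k, h1, Quot.map]
      · have h2 : e (t a) = u := by
          rw [ht, ← Int.units_ne_iff_eq_neg.mp (Ne.symm h1)]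
        simp only [f, k, h1, if_false, Quot.map, h2, id, Prod.mk.injEq, and_true]
        exact (Quot.sound (r := fun a b => R a b ∨ b = t a) (Or.inr rfl)).symm
  rw [hcard, Nat.card_prod]
  have : Nat.card ℤˣ = 2 := by simp
  rw [this, mul_comm]

end Count

section Basic

theorem rho_val (n : ℕ) (x : Fin (2 * n)) :
    (rho n x).val = if x.val % 2 = 0 then x.val + 1 else x.val - 1 := rfl

theorem rev_val (n : ℕ) (x : Fin (2 * n)) : (rev n x).val = 2 * n - 1 - x.val := rfl

theorem rot_val (n : ℕ) (x : Fin n) :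
    (finRotate n x).val = if x.val + 1 = n then 0 else x.val + 1 := by
  obtain _ | m := n
  · exact x.elim0
  · rw [coe_finRotate]
    simp only [Fin.ext_iff, Fin.val_last, Nat.add_right_cancel_iff]

theorem rho_mul_rho (n : ℕ) : rho n * rho n = 1 := by
  ext x
  have := x.isLt
  simp only [Equiv.Perm.mul_apply, rho_val, Equiv.Perm.one_apply]
  split_ifs <;> omega

theorem rev_mul_rev (n : ℕ) : rev n * rev n = 1 := by
  ext x
  have := x.isLt
  simp only [Equiv.Perm.mul_apply, rev_val, Equiv.Perm.one_apply]
  omega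

theorem rev_mul_rho (n : ℕ) : rev n * rho n = rho n * rev n := by
  ext x
  have := x.isLt
  have h0 := rev_val n x
  rw [Equiv.Perm.mul_apply, Equiv.Perm.mul_apply, rev_val, rho_val, rho_val]
  split_ifs <;> omega

theorem rot_rev_rot (n : ℕ) : finRotate (2 * n) * (rev n * finRotate (2 * n)) = rev n := by
  ext x
  have := x.isLt
  simp only [Equiv.Perm.mul_apply, rev_val, rot_val]
  split_ifs <;> omega

theorem rot_rot_rho (n : ℕ) : finRotate (2 * n) * (finRotate (2 * n) * rho n)
    = rho n * (finRotate (2 * n) * finRotate (2 * n)) := by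
  ext x
  have := x.isLt
  simp only [Equiv.Perm.mul_apply, rho_val, rot_val]
  split_ifs <;> omega

theorem sign_rho (n : ℕ) : Equiv.Perm.sign (rho n) = (-1) ^ n := by
  rw [Equiv.Perm.sign_of_pow_two_eq_one (by rw [pow_two, rho_mul_rho])]
  have : IsEmpty (Function.fixedPoints (rho n)) := by
    refine ⟨fun ⟨x, hx⟩ => ?_⟩
    have hx' : (rho n x).val = x.val := congrArg Fin.val hx
    rw [rho_val] at hx'
    split_ifs at hx' <;> omega
  rw [Fintype.card_fin, Fintype.card_eq_zero, Nat.sub_zero, Nat.mul_div_cancel_left _ two_pos]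

theorem numCycles_conj (n : ℕ) (x y : Equiv.Perm (Fin (2 * n))) :
    numCycles n (y * x * y⁻¹) = numCycles n x := by
  unfold numCycles
  rw [Equiv.Perm.cycleType_conj, Equiv.Perm.card_support_conj]

theorem numCycles_inv (n : ℕ) (x : Equiv.Perm (Fin (2 * n))) :
    numCycles n x⁻¹ = numCycles n x := by
  unfold numCycles
  rw [Equiv.Perm.cycleType_inv, Equiv.Perm.support_inv]

end Basic

section GroupId

variable {G : Type*} [Group G] (b p r : G)

theorem gi_b2inv_p (hbp : b * (b * p) = p * (b * b)) :
    b⁻¹ * (b⁻¹ * p) = p * (b⁻¹ * b⁻¹) := by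
  have : b⁻¹ * (b⁻¹ * (b * (b * p))) * (b⁻¹ * b⁻¹) = b⁻¹ * (b⁻¹ * (p * (b * b))) * (b⁻¹ * b⁻¹) := by
    rw [hbp]
  simpa [mul_assoc] using this.symm

theorem gi_rb (hr : r * r = 1) (hb : b * (r * b) = r) : r * b = b⁻¹ * r := by
  rw [eq_inv_mul_iff_mul_eq, hb]

theorem gi_rbi (hr : r * r = 1) (hb : b * (r * b) = r) : r * b⁻¹ = b * r := by
  rw [mul_inv_eq_iff_eq_mul, mul_assoc, hb]

/-- `s c = c s`. -/
theorem gi_sc (hbp : b * (b * p) = p * (b * b)) (a : G) :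
    b⁻¹ * p * (b ^ 2 * a * (b ^ 2)⁻¹)⁻¹ * b = b ^ 2 * (b⁻¹ * p * a⁻¹ * b) * (b ^ 2)⁻¹ := by
  have h1 : p * b ^ 2 = b ^ 2 * p := by rw [pow_two, ← hbp, mul_assoc]
  calc _ = b⁻¹ * (p * b ^ 2) * a⁻¹ * (b ^ 2)⁻¹ * b := by group
    _ = _ := by rw [h1]; group

/-- `c s s = 1`. -/
theorem gi_ss (hp : p * p = 1) (hbp : b * (b * p) = p * (b * b)) (a : G)
    (ha : (b⁻¹ * a) * p = p * (b⁻¹ * a)) :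
    b ^ 2 * (b⁻¹ * p * (b⁻¹ * p * a⁻¹ * b)⁻¹ * b) * (b ^ 2)⁻¹ = a := by
  have hpi : p⁻¹ = p := inv_eq_of_mul_eq_one_left hp
  calc _ = b * p * ((b⁻¹ * a) * p⁻¹) := by group
    _ = b * (p * p) * (b⁻¹ * a) := by rw [hpi, ha]; group
    _ = a := by rw [hp]; group

/-- `s r = r c s`. -/
theorem gi_sr (hr : r * r = 1) (hb : b * (r * b) = r) (hrp : r * p = p * r) (a : G) :
    b⁻¹ * p * (r * a * r)⁻¹ * b = r * (b ^ 2 * (b⁻¹ * p * a⁻¹ * b) * (b ^ 2)⁻¹) * r := by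
  have hri : r⁻¹ = r := inv_eq_of_mul_eq_one_left hr
  have h1 := gi_rb b r hr hb
  have h2 := gi_rbi b r hr hb
  calc _ = b⁻¹ * (p * r⁻¹) * a⁻¹ * (r⁻¹ * b) := by group
    _ = (r * b) * p * a⁻¹ * (b⁻¹ * r) := by rw [hri, ← hrp, h1]; group
    _ = _ := by group

/-- `c r c = r`. -/
theorem gi_crc (hr : r * r = 1) (hb : b * (r * b) = r) (a : G) :
    b ^ 2 * (r * (b ^ 2 * a * (b ^ 2)⁻¹) * r) * (b ^ 2)⁻¹ = r * a * r := by
  have hri : r⁻¹ = r := inv_eq_of_mul_eq_one_left hr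
  have h3 : b ^ 2 * r * b ^ 2 = r := by
    calc _ = b * (b * (r * b)) * b := by simp only [pow_two, mul_assoc]
      _ = r := by rw [hb, mul_assoc, hb]
  calc _ = (b ^ 2 * r * b ^ 2) * a * (b ^ 2 * r⁻¹ * b ^ 2)⁻¹ := by group
    _ = _ := by rw [hri, h3, hri]

end GroupId

section Preserve

theorem mem_Ugen_iff (n g : ℕ) (σ : Equiv.Perm (Fin (2 * n))) :
    σ ∈ Ugen n g ↔ ((finRotate (2 * n))⁻¹ * σ) ∈ Subgroup.centralizer {rho n} ∧
       numCycles n σ + numCycles n (σ * rho n) + 2 * g = n + 2 := by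
  unfold Ugen
  simp only [Set.mem_ofPred_eq]
  refine and_congr_left fun _ => ⟨?_, fun h => ⟨_, h, by group⟩⟩
  rintro ⟨ξ, h, rfl⟩
  simpa using h

theorem mem_cent_iff (n : ℕ) (ξ : Equiv.Perm (Fin (2 * n))) :
    ξ ∈ Subgroup.centralizer {rho n} ↔ ξ * rho n = rho n * ξ := by
  rw [Subgroup.mem_centralizer_singleton_iff]

theorem rot2_mem (n : ℕ) : finRotate (2 * n) ^ 2 ∈ Subgroup.centralizer {rho n} := by
  rw [mem_cent_iff, pow_two, mul_assoc, rot_rot_rho]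

theorem rev_mem (n : ℕ) : rev n ∈ Subgroup.centralizer {rho n} := by
  rw [mem_cent_iff, rev_mul_rho]

theorem rho_mem (n : ℕ) : rho n ∈ Subgroup.centralizer {rho n} := by
  rw [mem_cent_iff]

theorem rev_inv (n : ℕ) : (rev n)⁻¹ = rev n := inv_eq_of_mul_eq_one_left (rev_mul_rev n)

theorem rho_inv (n : ℕ) : (rho n)⁻¹ = rho n := inv_eq_of_mul_eq_one_left (rho_mul_rho n)

theorem xi_conj (n : ℕ) (σ : Equiv.Perm (Fin (2 * n))) :
    (finRotate (2 * n))⁻¹ * conjB2 n σ =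
      finRotate (2 * n) ^ 2 * ((finRotate (2 * n))⁻¹ * σ) * (finRotate (2 * n) ^ 2)⁻¹ := by
  unfold conjB2; group

theorem xi_swap (n : ℕ) (σ : Equiv.Perm (Fin (2 * n))) :
    (finRotate (2 * n))⁻¹ * swapMap n σ =
      (finRotate (2 * n) ^ 2)⁻¹ * rho n * ((finRotate (2 * n))⁻¹ * σ)⁻¹ := by
  unfold swapMap; group

theorem xi_rev (n : ℕ) (σ : Equiv.Perm (Fin (2 * n))) :
    (finRotate (2 * n))⁻¹ * revMap n σ =
      (finRotate (2 * n) ^ 2)⁻¹ * rev n * ((finRotate (2 * n))⁻¹ * σ) * rev n := by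
  unfold revMap
  have h := gi_rbi _ _ (rev_mul_rev n) (rot_rev_rot n)
  calc _ = (finRotate (2 * n) ^ 2)⁻¹ * (finRotate (2 * n) * rev n) * σ * rev n := by group
    _ = _ := by rw [← h]; group

theorem conj_mem {n g : ℕ} {σ : Equiv.Perm (Fin (2 * n))} (h : σ ∈ Ugen n g) :
    conjB2 n σ ∈ Ugen n g := by
  rw [mem_Ugen_iff] at h ⊢
  obtain ⟨h1, h2⟩ := h
  refine ⟨?_, ?_⟩
  · rw [xi_conj]
    exact mul_mem (mul_mem (rot2_mem n) h1) (inv_mem (rot2_mem n))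
  · have h3 : conjB2 n σ * rho n =
        finRotate (2 * n) ^ 2 * (σ * rho n) * (finRotate (2 * n) ^ 2)⁻¹ := by
      have := (mem_cent_iff n _).1 (inv_mem (rot2_mem n))
      unfold conjB2
      rw [mul_assoc _ _ (rho n), this]
      group
    rw [h3, numCycles_conj]
    unfold conjB2
    rw [numCycles_conj, h2]

theorem rev_mem_Ugen {n g : ℕ} {σ : Equiv.Perm (Fin (2 * n))} (h : σ ∈ Ugen n g) :
    revMap n σ ∈ Ugen n g := by
  rw [mem_Ugen_iff] at h ⊢
  obtain ⟨h1, h2⟩ := h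
  refine ⟨?_, ?_⟩
  · rw [xi_rev]
    exact mul_mem (mul_mem (mul_mem (inv_mem (rot2_mem n)) (rev_mem n)) h1) (rev_mem n)
  · have h3 : revMap n σ * rho n = rev n * (σ * rho n) * (rev n)⁻¹ := by
      unfold revMap
      rw [mul_assoc _ _ (rho n), rev_mul_rho, rev_inv]
      group
    have h4 : revMap n σ = rev n * σ * (rev n)⁻¹ := by rw [rev_inv]; rfl
    rw [h3, numCycles_conj, h4, numCycles_conj, h2]

theorem swap_mem {n g : ℕ} {σ : Equiv.Perm (Fin (2 * n))} (h : σ ∈ Ugen n g) :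
    swapMap n σ ∈ Ugen n g := by
  rw [mem_Ugen_iff] at h ⊢
  obtain ⟨h1, h2⟩ := h
  refine ⟨?_, ?_⟩
  · rw [xi_swap]
    exact mul_mem (mul_mem (inv_mem (rot2_mem n)) (rho_mem n)) (inv_mem h1)
  · have h3 : swapMap n σ = (finRotate (2 * n))⁻¹ * (σ * rho n)⁻¹ * ((finRotate (2 * n))⁻¹)⁻¹ := by
      unfold swapMap
      rw [mul_inv_rev, rho_inv]
      group
    have h4 : swapMap n σ * rho n = (finRotate (2 * n))⁻¹ * σ⁻¹ * ((finRotate (2 * n))⁻¹)⁻¹ := by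
      have h5 := (mem_cent_iff n _).1 (inv_mem h1)
      calc _ = (finRotate (2 * n))⁻¹ * rho n * (((finRotate (2 * n))⁻¹ * σ)⁻¹ * rho n) := by
            unfold swapMap; group
        _ = (finRotate (2 * n))⁻¹ * (rho n * rho n) * (((finRotate (2 * n))⁻¹ * σ)⁻¹) := by
            rw [h5]; group
        _ = _ := by rw [rho_mul_rho]; group
    rw [h4, numCycles_conj, h3, numCycles_conj, numCycles_inv, numCycles_inv]
    omega

end Preserve

section Pairs

theorem half_eq {n : ℕ} {ξ : Equiv.Perm (Fin (2 * n))} (h : ξ * rho n = rho n * ξ)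
    {x y : Fin (2 * n)} (hxy : x.val / 2 = y.val / 2) : (ξ x).val / 2 = (ξ y).val / 2 := by
  by_cases hx : y = x
  · rw [hx]
  · have hy : y = rho n x := by
      rw [Fin.ext_iff] at hx ⊢
      rw [rho_val]
      split_ifs <;> omega
    have h1 : ξ (rho n x) = rho n (ξ x) := by
      rw [← Equiv.Perm.mul_apply, h, Equiv.Perm.mul_apply]
    rw [hy, h1, rho_val]
    split_ifs <;> omega

/-- The action of the centralizer of `ρ` on the `n` pairs. -/
def pairEnd (n : ℕ) : Subgroup.centralizer {rho n} →* Function.End (Fin n) where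
  toFun ξ := fun k => ⟨((ξ : Equiv.Perm (Fin (2 * n))) ⟨2 * k.val, by omega⟩).val / 2, by
    have := ((ξ : Equiv.Perm (Fin (2 * n))) ⟨2 * k.val, by omega⟩).isLt
    omega⟩
  map_one' := by
    funext k
    apply Fin.ext
    change 2 * k.val / 2 = k.val
    omega
  map_mul' := by
    rintro ⟨ξ, hξ⟩ ⟨η, hη⟩
    funext k
    apply Fin.ext
    refine half_eq ((mem_cent_iff n ξ).1 hξ) ?_
    simp only
    omega

/-- The sign of the action on pairs. -/
def pairSign (n : ℕ) : Subgroup.centralizer {rho n} →* ℤˣ :=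
  Equiv.Perm.sign.comp (pairEnd n).toHomPerm

theorem pairSign_rot2 (n : ℕ) : pairSign n ⟨_, rot2_mem n⟩ = (-1) ^ (n - 1) := by
  rw [← sign_finRotate n]
  change Equiv.Perm.sign ((pairEnd n).toHomPerm _) = _
  congr 1
  ext k
  have hk := k.isLt
  change ((finRotate (2 * n) ^ 2) ⟨2 * k.val, by omega⟩).val / 2 = _
  simp only [pow_two, Equiv.Perm.mul_apply, rot_val]
  split_ifs <;> omega

theorem pairSign_rho (n : ℕ) : pairSign n ⟨_, rho_mem n⟩ = 1 := by
  rw [← Equiv.Perm.sign_one (α := Fin n)]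
  change Equiv.Perm.sign ((pairEnd n).toHomPerm _) = _
  congr 1
  ext k
  have hk := k.isLt
  change ((rho n) ⟨2 * k.val, by omega⟩).val / 2 = _
  rw [rho_val, Equiv.Perm.one_apply]
  split_ifs <;> simp only at * <;> omega

end Pairs

section Main

/-- The invariant used for even `n`. -/
def inv0 (n g : ℕ) (σ : Ugen n g) : ℤˣ :=
  pairSign n ⟨_, ((mem_Ugen_iff n g σ).1 σ.2).1⟩

theorem units_mul_self (u : ℤˣ) : u * u = 1 := Int.units_mul_self u

theorem inv0_conj (n g : ℕ) (σ : Ugen n g) : inv0 n g ⟨_, conj_mem σ.2⟩ = inv0 n g σ := by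
  have : inv0 n g ⟨_, conj_mem σ.2⟩ =
      pairSign n (⟨_, rot2_mem n⟩ * ⟨_, ((mem_Ugen_iff n g σ).1 σ.2).1⟩ * ⟨_, rot2_mem n⟩⁻¹) := by
    unfold inv0
    congr 1
    exact Subtype.ext (xi_conj n σ)
  rw [this, map_mul, map_mul, map_inv, mul_right_comm, mul_inv_cancel, one_mul]
  rfl

theorem inv0_rev (n g : ℕ) (hn : 1 ≤ n) (he : Even n) (σ : Ugen n g) :
    inv0 n g ⟨_, rev_mem_Ugen σ.2⟩ = - inv0 n g σ := by
  have : inv0 n g ⟨_, rev_mem_Ugen σ.2⟩ =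
      pairSign n (⟨_, rot2_mem n⟩⁻¹ * ⟨_, rev_mem n⟩ *
        ⟨_, ((mem_Ugen_iff n g σ).1 σ.2).1⟩ * ⟨_, rev_mem n⟩) := by
    unfold inv0
    congr 1
    exact Subtype.ext (xi_rev n σ)
  have ho : Odd (n - 1) := Nat.Even.sub_odd hn he odd_one
  rw [this, map_mul, map_mul, map_mul, mul_right_comm, mul_assoc _ (pairSign n ⟨_, rev_mem n⟩)
    (pairSign n ⟨_, rev_mem n⟩), units_mul_self, map_inv, pairSign_rot2, ho.neg_one_pow]
  simp [inv0]

theorem inv0_swap (n g : ℕ) (hn : 1 ≤ n) (he : Even n) (σ : Ugen n g) :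
    inv0 n g ⟨_, swap_mem σ.2⟩ = - inv0 n g σ := by
  have : inv0 n g ⟨_, swap_mem σ.2⟩ =
      pairSign n (⟨_, rot2_mem n⟩⁻¹ * ⟨_, rho_mem n⟩ *
        ⟨_, ((mem_Ugen_iff n g σ).1 σ.2).1⟩⁻¹) := by
    unfold inv0
    exact congrArg (pairSign n) (Subtype.ext (xi_swap n σ))
  have ho : Odd (n - 1) := Nat.Even.sub_odd hn he odd_one
  rw [this, map_mul, map_mul, map_inv, map_inv, pairSign_rot2, pairSign_rho, ho.neg_one_pow]
  simp [inv0]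

theorem classes_rev_even (n g : ℕ) (hn : 1 ≤ n) (he : Even n) :
    numClasses n (Ugen n g) {conjB2 n} = 2 * numClasses n (Ugen n g) {conjB2 n, revMap n} := by
  unfold numClasses
  rw [card_quot_eq_two_mul _ (fun σ : Ugen n g => ⟨_, rev_mem_Ugen σ.2⟩) (inv0 n g)]
  · congr! 4
    simp [Subtype.ext_iff]
  · rintro a ⟨b, hb⟩ ⟨f, rfl, h⟩
    obtain rfl : b = conjB2 n a := h
    exact (inv0_conj n g a).symm
  · exact inv0_rev n g hn he
  · rintro a ⟨b, hb⟩ ⟨f, rfl, h⟩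
    obtain rfl : b = conjB2 n a := h
    refine (Quot.sound ⟨conjB2 n, rfl, ?_⟩).symm
    exact (gi_crc _ _ (rev_mul_rev n) (rot_rev_rot n) _).symm
  · intro a
    congr 1
    apply Subtype.ext
    change rev n * (rev n * a * rev n) * rev n = a
    rw [← mul_assoc, ← mul_assoc, rev_mul_rev, mul_assoc, rev_mul_rev]
    simp

theorem swap_swap_eq {n g : ℕ} {a : Equiv.Perm (Fin (2 * n))} (ha : a ∈ Ugen n g) :
    a = conjB2 n (swapMap n (swapMap n a)) :=
  (gi_ss _ _ (rho_mul_rho n) (rot_rot_rho n) a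
    ((mem_cent_iff n _).1 ((mem_Ugen_iff n g a).1 ha).1)).symm

theorem classes_swap_even (n g : ℕ) (hn : 1 ≤ n) (he : Even n) :
    numClasses n (Ugen n g) {conjB2 n} = 2 * numClasses n (Ugen n g) {conjB2 n, swapMap n} := by
  unfold numClasses
  rw [card_quot_eq_two_mul _ (fun σ : Ugen n g => ⟨_, swap_mem σ.2⟩) (inv0 n g)]
  · congr! 4
    simp [Subtype.ext_iff]
  · rintro a ⟨b, hb⟩ ⟨f, rfl, h⟩
    obtain rfl : b = conjB2 n a := h
    exact (inv0_conj n g a).symm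
  · exact inv0_swap n g hn he
  · rintro a ⟨b, hb⟩ ⟨f, rfl, h⟩
    obtain rfl : b = conjB2 n a := h
    refine Quot.sound ⟨conjB2 n, rfl, ?_⟩
    exact gi_sc _ _ (rot_rot_rho n) _
  · intro a
    exact Quot.sound ⟨conjB2 n, rfl, swap_swap_eq a.2⟩

theorem classes_odd (n g : ℕ) (ho : Odd n) :
    numClasses n (Ugen n g) {conjB2 n, revMap n} =
      2 * numClasses n (Ugen n g) {conjB2 n, revMap n, swapMap n} := by
  unfold numClasses
  rw [card_quot_eq_two_mul _ (fun σ : Ugen n g => ⟨_, swap_mem σ.2⟩)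
    (fun σ : Ugen n g => Equiv.Perm.sign (σ : Equiv.Perm (Fin (2 * n))))]
  · congr! 4
    simp [Subtype.ext_iff, or_assoc]
  · rintro a ⟨b, hb⟩ ⟨f, rfl | rfl, h⟩
    · obtain rfl : b = conjB2 n a := h
      simp only [conjB2, map_mul, map_inv, mul_right_comm _ _ (_ : ℤˣ)⁻¹]
      simp
    · obtain rfl : b = revMap n a := h
      simp only [revMap, map_mul]
      rw [mul_right_comm, units_mul_self, one_mul]
  · intro a
    simp only [swapMap, map_mul, map_inv, sign_rho, ho.neg_one_pow, Int.units_inv_eq_self]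
    rw [mul_right_comm, mul_right_comm (Equiv.Perm.sign (finRotate (2 * n))), units_mul_self]
    simp
  · rintro a ⟨b, hb⟩ ⟨f, rfl | rfl, h⟩
    · obtain rfl : b = conjB2 n a := h
      refine Quot.sound ⟨conjB2 n, Or.inl rfl, ?_⟩
      exact gi_sc _ _ (rot_rot_rho n) _
    · obtain rfl : b = revMap n a := h
      refine (Quot.sound (b := ⟨_, conj_mem (swap_mem a.2)⟩)
        ⟨conjB2 n, Or.inl rfl, rfl⟩).trans (Quot.sound ⟨revMap n, Or.inr rfl, ?_⟩)
      exact gi_sr _ _ _ (rev_mul_rev n) (rot_rev_rot n) (rev_mul_rho n) _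
  · intro a
    exact Quot.sound ⟨conjB2 n, Or.inl rfl, swap_swap_eq a.2⟩

end Main

/-- Theorem 4, relation for UOc: `|UOc| = |OOb|` for n even and `|UOc| = 2·|UOb|`
for n odd. -/
theorem UOc_relations (n : ℕ) (hn : 1 ≤ n) (g : ℕ) :
    (Even n →
      numClasses n (Ugen n g) {conjB2 n, revMap n}
        = numClasses n (Ugen n g) {conjB2 n, swapMap n}) ∧
    (Odd n →
      numClasses n (Ugen n g) {conjB2 n, revMap n}
        = 2 * numClasses n (Ugen n g) {conjB2 n, revMap n, swapMap n}) := by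
  refine ⟨fun he => ?_, fun ho => classes_odd n g ho⟩
  have h1 := classes_rev_even n g hn he
  have h2 := classes_swap_even n g hn he
  omega
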